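/- Let C ⊆ V be a set of controllable vertices. If a vertex v ∈ N(C) is alone in its C-equivalence class (i.e. no other vertex of N(C) is C-equivalent to v), then v is controllable. -/

import Mathlib

/-!
Let `L` be the space of vectors `g = (g_v)` of real polynomials with
`∑_v g_v(q_v) ∂_{p_v} ∈ 𝓜`. The double bracket `[[g ∂_p, X₀], h ∂_p]` equals `(g h)' ∂_p`, so `L`
is closed under `(g, h) ↦ (g h)'` (`MM.momentumField_derivMul`). For a controllable `c`, the bracket
`[∂_{q_c}, X₀]` gives `∑_{v ~ c} V''_{vc}(q_v - q_c) ∂_{p_v} ∈ 𝓜` modulo `∂_{p_c}`; bracketing with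
`∂_{q_c}` and Taylor's formula eliminate `q_c`, so that `L` contains the vector `(V''_{vc})_{v ~ c}`
and all its derivatives, and the components in `C` can be removed.

The rest is algebra in `L`. Call a set `K` of vertices cutting if `g ↦ 1_K g` preserves `L`. These
sets form a Boolean algebra; let `K` be the atom of `v`. For `F = (V''_{wc})_w` restricted to `K`,
with maximal degree `D ≥ 1`, the derivative of order `D - 1` is affine in each component. The
eigenvalues of `h ↦ (F^{(D-1)} h)'` separate the components by leading coefficient, so on the atom
the degree and leading coefficient are constant and `ℓ = (X - r_w)_{w ∈ K}` lies in `L` for suitable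
centers `r_w`. The operator `h ↦ (ℓ h)'` multiplies the order-`k` Taylor term around `r_w` by
`k + 1`, so `L` contains the separate Taylor terms of `F` on `K`. Multiplication by the Taylor
coefficients then preserves `L`, their level sets are cutting, and the coefficients are constant on
`K`. So the components of `F` on an atom are translates of one another (`atomOf_translate`).

Doing this for all `c ∈ C` shows that each vertex in the atom of `v` is `C`-equivalent to `v`. So the
atom is `{v}`, the unit vector at `v` belongs to `L`, and
`[∂_{p_v}, X₀] = ∂_{q_v} - γ_v ∂_{p_v}` gives `∂_{q_v}`.
-/

open scoped Classical
open Polynomial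

noncomputable section

/-- Phase space ℝ^{2|V|}: positions `q = x.1` and momenta `p = x.2`. -/
abbrev Phase (V : Type) := (V → ℝ) × (V → ℝ)

/-- Lie bracket of vector fields: `[Y,Z](x) = DZ(x)·Y(x) − DY(x)·Z(x)`. -/
def lieB {V : Type} [Fintype V] (Y Z : Phase V → Phase V) : Phase V → Phase V :=
  fun x => fderiv ℝ Z x (Y x) - fderiv ℝ Y x (Z x)

/-- The constant vector field `∂_{p_v}`. -/
def dp {V : Type} [Fintype V] [DecidableEq V] (v : V) : Phase V → Phase V :=
  fun _ => (0, Pi.single v 1)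

/-- The constant vector field `∂_{q_v}`. -/
def dq {V : Type} [Fintype V] [DecidableEq V] (v : V) : Phase V → Phase V :=
  fun _ => (Pi.single v 1, 0)

/-- The constant vector field `∑_{v ∈ A} ∂_{p_v}`. -/
def dpSum {V : Type} [Fintype V] [DecidableEq V] (A : Finset V) : Phase V → Phase V :=
  fun _ => (0, ∑ v ∈ A, Pi.single v 1)

/-- The constant vector field `∑_{v ∈ A} ∂_{q_v}`. -/
def dqSum {V : Type} [Fintype V] [DecidableEq V] (A : Finset V) : Phase V → Phase V :=
  fun _ => (∑ v ∈ A, Pi.single v 1, 0)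

/-- The drift vector field
`X₀ = −∑_{v∈V*} γ_v p_v ∂_{p_v} + ∑_{v∈V} (p_v ∂_{q_v} − U_v'(q_v) ∂_{p_v})
      − ∑_{{u,v}∈E} V_{uv}'(q_u − q_v)(∂_{p_u} − ∂_{p_v})`,
written componentwise (using the symmetry `V_{vu}(x) = V_{uv}(−x)` of the
interaction potentials, the `∂_{p_v}`-component of the edge term at a vertex `v` is
`−∑_{w ~ v} V_{vw}'(q_v − q_w)`). -/
def X0 {V : Type} [Fintype V] [DecidableEq V] (G : SimpleGraph V) [DecidableRel G.Adj]
    (γ : V → ℝ) (U : V → ℝ → ℝ) (Vp : V → V → Polynomial ℝ) : Phase V → Phase V :=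
  fun x =>
    (x.2, fun v =>
      -(γ v) * x.2 v - deriv (U v) (x.1 v) -
        ∑ w ∈ Finset.univ.filter (fun w => G.Adj v w),
          (derivative (Vp v w)).eval (x.1 v - x.1 w))

/-- The smallest collection `𝓜` of vector fields on `ℝ^{2|V|}` that contains `∂_{p_v}`
for every `v ∈ V*`, and is closed under linear combinations, Lie brackets,
bracketing with `X₀`, and multiplication by smooth scalar functions. -/
inductive MM {V : Type} [Fintype V] [DecidableEq V] (Vstar : Finset V)
    (X₀ : Phase V → Phase V) : (Phase V → Phase V) → Prop
  | basic (v : V) (hv : v ∈ Vstar) : MM Vstar X₀ (dp v)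
  | add {Y Z : Phase V → Phase V} : MM Vstar X₀ Y → MM Vstar X₀ Z → MM Vstar X₀ (Y + Z)
  | smul (a : ℝ) {Y : Phase V → Phase V} : MM Vstar X₀ Y → MM Vstar X₀ (a • Y)
  | lie {Y Z : Phase V → Phase V} : MM Vstar X₀ Y → MM Vstar X₀ Z → MM Vstar X₀ (lieB Y Z)
  | lieX {Y : Phase V → Phase V} : MM Vstar X₀ Y → MM Vstar X₀ (lieB Y X₀)
  | mulS (f : Phase V → ℝ) (hf : ContDiff ℝ (⊤ : ℕ∞) f) {Y : Phase V → Phase V} :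
      MM Vstar X₀ Y → MM Vstar X₀ (fun x => f x • Y x)

/-- A vertex `v` is controllable if `∂_{q_v} ∈ 𝓜` and `∂_{p_v} ∈ 𝓜`. -/
def Controllable {V : Type} [Fintype V] [DecidableEq V] (Vstar : Finset V)
    (X₀ : Phase V → Phase V) (v : V) : Prop :=
  MM Vstar X₀ (dq v) ∧ MM Vstar X₀ (dp v)

/-- Two polynomials are equivalent if `f(·) = g(· + δ)` for some `δ ∈ ℝ`. -/
def PolyEquiv (f g : Polynomial ℝ) : Prop :=
  ∃ δ : ℝ, ∀ x : ℝ, f.eval x = g.eval (x + δ)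

/-- `N(C)`: the set of vertices not in `C` having at least one neighbor in `C`. -/
def NC {V : Type} [Fintype V] [DecidableEq V] (G : SimpleGraph V) [DecidableRel G.Adj]
    (C : Finset V) : Finset V :=
  Finset.univ.filter fun v => v ∉ C ∧ ∃ c ∈ C, G.Adj c v

/-- `v` and `w` are `C`-equivalent: they are `C`-siblings (connected to `C` in exactly
the same way) and for each `c ∈ C` adjacent to both, the polynomials `V''_{cv}` and
`V''_{cw}` are equivalent. -/
def CEquiv {V : Type} (G : SimpleGraph V) (Vp : V → V → Polynomial ℝ) (C : Finset V)
    (v w : V) : Prop :=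
  (∀ c ∈ C, G.Adj c v ↔ G.Adj c w) ∧
  (∀ c ∈ C, G.Adj c v → G.Adj c w →
    PolyEquiv (derivative (derivative (Vp c v))) (derivative (derivative (Vp c w))))

/-! ### Vectors of polynomials closed under `(g, h) ↦ (g h)'` -/

section Abstract

variable {ι : Type} {L : Submodule ℝ (ι → ℝ[X])}

/-- Closure of a space of polynomial vectors under the componentwise operation
`(g, h) ↦ (g h)'`, which is what iterated brackets produce on momentum fields. -/
def DerivMulClosed (L : Submodule ℝ (ι → ℝ[X])) : Prop :=
  ∀ g ∈ L, ∀ h ∈ L, (fun i => derivative (g i * h i)) ∈ L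

/-- `K` cuts `L` if zeroing all components outside `K` maps `L` into itself.
Such sets form a Boolean algebra. -/
def Cuts (L : Submodule ℝ (ι → ℝ[X])) (K : Set ι) : Prop :=
  ∀ h ∈ L, K.indicator h ∈ L

/-- The atom of `v` in the Boolean algebra of sets cutting `L`: the vertices that cannot be
separated from `v` by a set that cuts `L`. -/
def atomOf (L : Submodule ℝ (ι → ℝ[X])) (v : ι) : Set ι :=
  {w | ∀ K, Cuts L K → v ∈ K → w ∈ K}

/-- A subspace invariant under `T` that contains a sum of eigenvectors with distinct eigenvalues
contains each summand. All projections used below come from this lemma. -/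
theorem mem_of_sum_eigenvectors {M κ : Type*} [AddCommGroup M] [Module ℝ M]
    (N : Submodule ℝ M) (T : M →ₗ[ℝ] M) (hT : ∀ y ∈ N, T y ∈ N) (μ : κ → ℝ) (s : Finset κ) :
    ∀ x : κ → M, Set.InjOn μ s → (∀ i ∈ s, T (x i) = μ i • x i) → ∑ i ∈ s, x i ∈ N →
      ∀ i ∈ s, x i ∈ N := by
  classical
  induction s using Finset.induction_on with
  | empty => simp
  | insert a s ha ih =>
    intro x hμ hx hsum
    have hs : ∀ i ∈ s, x i ∈ N := by
      intro i hi
      have hne : μ i - μ a ≠ 0 := by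
        intro h
        have : i = a := hμ (by simp [hi]) (by simp) (by linarith)
        exact ha (this ▸ hi)
      have key := ih (fun i => (μ i - μ a) • x i) (hμ.mono (by simp))
        (fun j hj => by rw [map_smul, hx j (by simp [hj]), smul_comm]) (by
          have h1 := N.sub_mem (hT _ hsum) (N.smul_mem (μ a) hsum)
          convert h1 using 1
          rw [map_sum, Finset.smul_sum, ← Finset.sum_sub_distrib, Finset.sum_insert ha,
            hx a (by simp), sub_self, zero_add]
          refine Finset.sum_congr rfl fun j hj => ?_
          rw [hx j (by simp [hj]), sub_smul]) i hi
      exact (N.smul_mem_iff hne).1 key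
    intro i hi
    rcases Finset.mem_insert.1 hi with rfl | hi
    · rw [Finset.sum_insert ha] at hsum
      exact (N.add_mem_iff_left (N.sum_mem hs)).1 hsum
    · exact hs i hi

/-- The operator `h ↦ (g h)'`. -/
def derivMul (g : ι → ℝ[X]) : (ι → ℝ[X]) →ₗ[ℝ] (ι → ℝ[X]) where
  toFun h := fun i => derivative (g i * h i)
  map_add' x y := by ext1 i; simp [mul_add]
  map_smul' a x := by ext1 i; simp

/-- Componentwise multiplication by the constants `a`. -/
def scaleBy (a : ι → ℝ) : (ι → ℝ[X]) →ₗ[ℝ] (ι → ℝ[X]) where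
  toFun h := fun i => C (a i) * h i
  map_add' x y := by ext1 i; simp [mul_add]
  map_smul' a x := by ext1 i; simp

theorem Cuts.inter {K K' : Set ι} (h : Cuts L K) (h' : Cuts L K') : Cuts L (K ∩ K') := by
  intro g hg
  rw [← Set.indicator_indicator]
  exact h _ (h' _ hg)

theorem Cuts.compl {K : Set ι} (h : Cuts L K) : Cuts L Kᶜ := by
  intro g hg
  rw [Set.indicator_compl]
  exact L.sub_mem hg (h _ hg)

theorem cuts_atomOf [Fintype ι] (v : ι) : Cuts L (atomOf L v) := by
  classical
  have h : ∀ w, ∃ K, Cuts L K ∧ v ∈ K ∧ (w ∈ K → w ∈ atomOf L v) := by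
    intro w
    by_cases hw : w ∈ atomOf L v
    · exact ⟨Set.univ, fun g hg => by simpa using hg, trivial, fun _ => hw⟩
    · have hw' := hw
      simp only [atomOf, Set.mem_ofPred_eq, not_forall] at hw
      obtain ⟨K, h1, h2, h3⟩ := hw
      exact ⟨K, h1, h2, fun h => absurd h h3⟩
  choose K hK hv hw using h
  have hs : ∀ s : Finset ι, Cuts L (⋂ w ∈ s, K w) := by
    intro s
    induction s using Finset.induction_on with
    | empty => intro g hg; simpa using hg
    | insert a s _ ih => rw [Finset.set_biInter_insert]; exact (hK a).inter ih
  convert hs Finset.univ using 1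
  ext w
  simp only [Finset.mem_univ, Set.iInter_true, Set.mem_iInter]
  exact ⟨fun h u => h _ (hK u) (hv u), fun h => hw w (h w)⟩

/-- If multiplication by the constants `a` preserves `L`, the level sets of `a` cut `L`:
they give the eigenspaces of this multiplication. -/
theorem cuts_level [Fintype ι] {a : ι → ℝ} (ha : ∀ h ∈ L, scaleBy a h ∈ L) (c : ℝ) :
    Cuts L {w | a w = c} := by
  classical
  intro h hh
  by_cases hc : c ∈ Finset.univ.image a
  · refine mem_of_sum_eigenvectors L (scaleBy a) ha id (Finset.univ.image a)
      (fun c => {w | a w = c}.indicator h) (Function.injective_id.injOn) ?_ ?_ c hc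
    · intro c _
      ext1 w
      by_cases hw : a w = c
      · simp [scaleBy, Set.indicator, hw, smul_eq_C_mul]
      · simp [scaleBy, Set.indicator, hw]
    · convert hh using 1
      ext1 w
      simp [Finset.sum_apply, Set.indicator]
  · convert L.zero_mem using 1
    ext1 w
    have : a w ≠ c := fun h => hc (by simp [← h])
    simp [Set.indicator, this]

/-- The restriction of an affine vector `g ∈ L` to the components of slope `c` is an eigenvector
of `h ↦ (g h)'` for the eigenvalue `2 c`, hence lies in `L`. Components of slope `0` are constant
and are killed, consistently with the eigenvalue `0`. -/
theorem linear_part_mem [Fintype ι] (hL : DerivMulClosed L) {g : ι → ℝ[X]} (hg : g ∈ L)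
    (lam mu : ι → ℝ) (hlin : ∀ w, g w = C (lam w) * X + C (mu w)) (c : ℝ) :
    {w | lam w = c}.indicator g ∈ L := by
  classical
  by_cases hc : c ∈ Finset.univ.image lam
  · refine mem_of_sum_eigenvectors L (derivMul g) (hL g hg) (fun c => 2 * c)
      (Finset.univ.image lam) (fun c => {w | lam w = c}.indicator g)
      (fun a _ b _ h => by simpa using h) ?_ ?_ c hc
    · intro c _
      ext1 w
      by_cases hw : lam w = c
      · simp [derivMul, Set.indicator, hw, smul_eq_C_mul, hlin, C_mul, C_ofNat]
        ring
      · simp [derivMul, Set.indicator, hw]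
    · convert hg using 1
      ext1 w
      simp [Finset.sum_apply, Set.indicator]
  · convert L.zero_mem using 1
    ext1 w
    have : lam w ≠ c := fun h => hc (by simp [← h])
    simp [Set.indicator, this]

/-- The vector with components `c w * (X - r w) ^ k` for `w ∈ S`, and `0` outside `S`. -/
def taylorTerm (S : Set ι) (r : ι → ℝ) (k : ℕ) (c : ι → ℝ) : ι → ℝ[X] :=
  S.indicator fun w => C (c w) * (X - C (r w)) ^ k

theorem derivative_taylor_pow (a r : ℝ) (k : ℕ) :
    derivative (C a * (X - C r) ^ (k + 1)) = C ((k + 1) * a) * (X - C r) ^ k := by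
  simp [derivative_pow]
  ring

/-- Componentwise Taylor expansion around the centers `r`, truncated at any sufficiently large
order. -/
theorem exists_sum_taylorTerm [Fintype ι] (S : Set ι) (r : ι → ℝ) (h : ι → ℝ[X]) :
    ∃ N : ℕ, ∀ M, N < M → S.indicator h = ∑ k ∈ Finset.range M,
      taylorTerm S r k (fun w => (taylor (r w) (h w)).coeff k) := by
  refine ⟨Finset.univ.sup (fun w => (h w).natDegree), fun M hM => ?_⟩
  ext1 w
  by_cases hw : w ∈ S
  · simp only [Finset.sum_apply, taylorTerm, hw, Set.indicator_of_mem]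
    conv_lhs => rw [← sum_taylor_eq (h w) (r w)]
    refine sum_over_range' _ (by simp) M ?_
    rw [natDegree_taylor]
    exact (Finset.le_sup (f := fun w => (h w).natDegree) (Finset.mem_univ w)).trans_lt hM
  · simp [Finset.sum_apply, taylorTerm, hw]

/-- If `L` contains `ℓ = (X - r w)_{w ∈ S}`, then it contains each Taylor term on `S` of each of
its elements: the order-`k` term is an eigenvector of `h ↦ (ℓ h)'` for the eigenvalue `k + 1`,
and the components outside `S` have eigenvalue `0`. -/
theorem taylorTerm_mem [Fintype ι] (hL : DerivMulClosed L) {S : Set ι} {r : ι → ℝ}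
    (hl : taylorTerm S r 1 (fun _ => 1) ∈ L) {h : ι → ℝ[X]} (hh : h ∈ L) (k : ℕ) :
    taylorTerm S r k (fun w => (taylor (r w) (h w)).coeff k) ∈ L := by
  classical
  obtain ⟨N, hN⟩ := exists_sum_taylorTerm S r h
  have hN' := hN (N + k + 1) (by omega)
  have := mem_of_sum_eigenvectors L (derivMul (taylorTerm S r 1 (fun _ => 1))) (hL _ hl)
    (fun j : Option ℕ => j.elim 0 fun k => (k : ℝ) + 1)
    (Finset.insertNone (Finset.range (N + k + 1)))
    (fun j => j.elim (Sᶜ.indicator h) fun k =>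
      taylorTerm S r k (fun w => (taylor (r w) (h w)).coeff k)) ?_ ?_ ?_ (some k)
      (by simp)
  · exact this
  · rintro (_ | a) _ (_ | b) _ hab
    · rfl
    · exfalso; simp at hab; have := b.cast_nonneg (α := ℝ); linarith
    · exfalso; simp at hab; have := a.cast_nonneg (α := ℝ); linarith
    · simpa using hab
  · rintro (_ | j) _
    · ext1 w
      by_cases hw : w ∈ S <;> simp [derivMul, taylorTerm, hw]
    · ext1 w
      by_cases hw : w ∈ S
      · have := derivative_taylor_pow ((taylor (r w) (h w)).coeff j) (r w) j
        simp only [derivMul, taylorTerm, hw, Set.indicator_of_mem, LinearMap.coe_mk,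
          AddHom.coe_mk, Option.elim_some, Pi.smul_apply, smul_eq_C_mul]
        rw [← mul_assoc (C ((j : ℝ) + 1)), ← C_mul, ← this]
        congr 1
        simp
        ring
      · simp [derivMul, taylorTerm, hw]
  · simp only [Finset.sum_insertNone, Option.elim_none, Option.elim_some]
    rw [← hN', Set.indicator_compl_add_self]
    exact hh

theorem cuts_of_linear [Fintype ι] (hL : DerivMulClosed L) {S : Set ι} {r : ι → ℝ}
    (hl : taylorTerm S r 1 (fun _ => 1) ∈ L) : Cuts L S := by
  intro h hh
  obtain ⟨N, hN⟩ := exists_sum_taylorTerm S r h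
  rw [hN _ N.lt_succ_self]
  exact L.sum_mem fun k _ => taylorTerm_mem hL hl hh k

theorem taylorTerm_mul_mem (hL : DerivMulClosed L) {S : Set ι} {r : ι → ℝ} {j k : ℕ}
    {a b : ι → ℝ} (ha : taylorTerm S r (j + 1) a ∈ L) (hb : taylorTerm S r k b ∈ L) :
    taylorTerm S r (j + k) (fun w => a w * b w) ∈ L := by
  have h := hL _ ha _ hb
  have hne : ((j + k : ℕ) : ℝ) + 1 ≠ 0 := by positivity
  rw [← L.smul_mem_iff hne]
  convert h using 1
  ext1 w
  by_cases hw : w ∈ S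
  · simp only [taylorTerm, hw, Set.indicator_of_mem, Pi.smul_apply, smul_eq_C_mul]
    rw [← mul_assoc, ← C_mul, ← derivative_taylor_pow]
    congr 1
    simp
    ring
  · simp [taylorTerm, hw]

theorem taylorTerm_descend (hL : DerivMulClosed L) {S : Set ι} {r : ι → ℝ}
    (h1 : taylorTerm S r 0 (fun _ => 1) ∈ L) {a : ι → ℝ} {j : ℕ} :
    ∀ i, taylorTerm S r (j + i) a ∈ L → taylorTerm S r j a ∈ L := by
  intro i
  induction i with
  | zero => exact id
  | succ i ih =>
    intro h
    refine ih ?_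
    simpa using taylorTerm_mul_mem hL (j := j + i) h h1

/-- If `L` contains `a w * (X - r w)` and `X - r w` on `S`, then multiplication by `a`
(extended by `0`) preserves `L`, since it does so on every Taylor term. -/
theorem scaleBy_mem [Fintype ι] (hL : DerivMulClosed L) {S : Set ι} {r : ι → ℝ}
    (hl : taylorTerm S r 1 (fun _ => 1) ∈ L) {a : ι → ℝ} (ha : taylorTerm S r 1 a ∈ L) :
    ∀ h ∈ L, scaleBy (S.indicator a) h ∈ L := by
  intro h hh
  obtain ⟨N, hN⟩ := exists_sum_taylorTerm S r h
  have : scaleBy (S.indicator a) h = ∑ k ∈ Finset.range (N + 1),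
      taylorTerm S r (0 + k) (fun w => a w * (taylor (r w) (h w)).coeff k) := by
    ext1 w
    by_cases hw : w ∈ S
    · have := congrFun (hN _ N.lt_succ_self) w
      simp only [Finset.sum_apply, taylorTerm, hw, Set.indicator_of_mem] at this
      simp only [Finset.sum_apply, taylorTerm, hw, Set.indicator_of_mem, scaleBy,
        LinearMap.coe_mk, AddHom.coe_mk, zero_add, C_mul, mul_assoc]
      rw [← Finset.mul_sum, ← this]
    · simp [scaleBy, taylorTerm, hw, Finset.sum_apply]
  rw [this]
  exact L.sum_mem fun k _ => taylorTerm_mul_mem hL ha (taylorTerm_mem hL hl hh k)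

/-- Let `F` and its derivatives lie in `L`, each component being zero or nonconstant. On an atom
`K`, all components of `F` are translates of one another. The last affine derivative of `F` shows
that all components have the same degree and leading coefficient, and yields centers `r` with
`(X - r w)_{w ∈ K} ∈ L`. Every Taylor coefficient of `F w` around `r w` is then a multiplier of
`L`, so it is constant on `K`. -/
theorem atomOf_translate [Fintype ι] (hL : DerivMulClosed L) {F : ι → ℝ[X]}
    (hF : ∀ k, (fun w => derivative^[k] (F w)) ∈ L)
    (hdeg : ∀ w, F w = 0 ∨ 1 ≤ (F w).natDegree) {v w : ι} (hw : w ∈ atomOf L v) :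
    ∃ s, F w = taylor s (F v) := by
  classical
  set K := atomOf L v with hKdef
  have hK : Cuts L K := cuts_atomOf v
  have hvK : v ∈ K := fun _ _ h => h
  by_cases hzero : ∀ u ∈ K, F u = 0
  · exact ⟨0, by simp [hzero w hw, hzero v hvK]⟩
  push Not at hzero
  obtain ⟨u₁, hu₁K, hu₁⟩ := hzero
  obtain ⟨w₀, hw₀K, hmax⟩ : ∃ w₀ ∈ K, ∀ u ∈ K, (F u).natDegree ≤ (F w₀).natDegree :=
    Set.exists_max_image K (fun u => (F u).natDegree) (Set.toFinite K) ⟨u₁, hu₁K⟩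
  obtain ⟨d, hd⟩ : ∃ d, (F w₀).natDegree = d + 1 := by
    have h1 := (hdeg u₁).resolve_left hu₁
    have h2 := hmax u₁ hu₁K
    exact ⟨(F w₀).natDegree - 1, by omega⟩
  rw [hd] at hmax
  set α : ℝ := (F w₀).coeff (d + 1) with hα
  have hα0 : α ≠ 0 := by
    rw [hα, ← hd]
    refine leadingCoeff_ne_zero.2 fun h => ?_
    simp [h] at hd
  -- the derivative of order `d` is affine on `K`, with slope proportional to the
  -- coefficient of order `d + 1`
  set g : ι → ℝ[X] := K.indicator fun u => derivative^[d] (F u) with hg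
  have hgL : g ∈ L := hK _ (hF d)
  set lam : ι → ℝ := fun u => (g u).coeff 1 with hlam
  have hlin : ∀ u, g u = C (lam u) * X + C ((g u).coeff 0) := by
    intro u
    refine eq_X_add_C_of_natDegree_le_one ?_
    by_cases hu : u ∈ K
    · simp only [hg, hu, Set.indicator_of_mem]
      have := natDegree_iterate_derivative (F u) d
      have := hmax u hu
      omega
    · simp [hg, hu]
  have hP : (((1 + d).descFactorial d : ℕ) : ℝ) ≠ 0 := by
    rw [Nat.cast_ne_zero, Ne, Nat.descFactorial_eq_zero_iff_lt]
    omega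
  have hlamK : ∀ u ∈ K, lam u = ((1 + d).descFactorial d : ℕ) * (F u).coeff (d + 1) := by
    intro u hu
    simp only [hg, hlam, hu, Set.indicator_of_mem, coeff_iterate_derivative, nsmul_eq_mul]
    rw [add_comm 1 d]
  set c : ℝ := lam w₀ with hc
  have hc0 : c ≠ 0 := by
    rw [hc, hlamK w₀ hw₀K]
    exact mul_ne_zero hP hα0
  set r : ι → ℝ := fun u => -((g u).coeff 0) / c with hr
  have hglin : ∀ u, lam u = c → g u = C c * (X - C (r u)) := by
    intro u hu
    rw [hlin u, hu, mul_sub, ← C_mul, hr]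
    have : c * (-(g u).coeff 0 / c) = -(g u).coeff 0 := by field_simp
    simp only [this, C_neg]
    ring
  have hlS : taylorTerm {u | lam u = c} r 1 (fun _ => 1) ∈ L := by
    rw [← L.smul_mem_iff hc0]
    convert linear_part_mem hL hgL lam _ hlin c using 1
    ext1 u
    by_cases hu : lam u = c
    · simp [taylorTerm, Set.indicator, hu, hglin u hu, smul_eq_C_mul]
    · simp [taylorTerm, Set.indicator, hu]
  -- The components of slope `c` cut `L`; being contained in the atom `K` and meeting it at `w₀`,
  -- they fill it.
  have hSK : {u | lam u = c} = K := by
    have hS := cuts_of_linear hL hlS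
    apply Set.Subset.antisymm
    · intro u hu
      by_contra huK
      refine hc0 ?_
      rw [← show lam u = c from hu]
      simp [hlam, hg, huK]
    · intro u hu
      refine hu _ hS ?_
      by_contra hv
      exact hw₀K _ hS.compl hv rfl
  rw [hSK] at hlS
  have hlamc : ∀ u ∈ K, lam u = c := fun u hu => by rw [← hSK] at hu; exact hu
  have hone : taylorTerm K r 0 (fun _ => 1) ∈ L := by
    rw [← L.smul_mem_iff hc0]
    convert hK _ (hF (d + 1)) using 1
    ext1 u
    by_cases hu : u ∈ K
    · have h1 : derivative (g u) = C c := by rw [hlin u, hlamc u hu]; simp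
      simp only [hg, hu, Set.indicator_of_mem] at h1
      simp [taylorTerm, hu, Function.iterate_succ_apply', h1, smul_eq_C_mul]
    · simp [taylorTerm, hu]
  have hcoeff : ∀ u ∈ K, (F u).coeff (d + 1) = α := by
    intro u hu
    have h1 := hlamc u hu
    rw [hc, hlamK u hu, hlamK w₀ hw₀K] at h1
    exact mul_left_cancel₀ hP h1
  have hcoeffs : ∀ k, taylorTerm K r 1 (fun u => (taylor (r u) (F u)).coeff k) ∈ L := by
    intro k
    have hk := taylorTerm_mem hL hlS (hF 0) k
    simp only [Function.iterate_zero, id] at hk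
    rcases k with _ | k
    -- The constant term is not obtained by lowering the degree. If `F` is affine on `K` it vanishes
    -- by the choice of `r`; otherwise `(X - r w) ^ 2` is available to raise its degree by one.
    · rcases d with _ | e
      · convert L.zero_mem using 1
        ext1 u
        by_cases hu : u ∈ K
        · have h1 := hglin u (hlamc u hu)
          simp only [hg, hu, Set.indicator_of_mem, Function.iterate_zero, id] at h1
          simp [taylorTerm, hu, h1, taylor_coeff_zero]
        · simp [taylorTerm, hu]
      · have h2 : taylorTerm K r (2 + e) (fun _ => α) ∈ L := by
          convert taylorTerm_mem hL hlS (hF 0) (2 + e) using 1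
          ext1 u
          by_cases hu : u ∈ K
          · have hdu : (F u).natDegree = 2 + e := by
              have h3 := hmax u hu
              have h4 : e + 1 + 1 ≤ (F u).natDegree :=
                le_natDegree_of_ne_zero (by rw [hcoeff u hu]; exact hα0)
              omega
            have h5 := coeff_taylor_natDegree (r u) (F u)
            rw [leadingCoeff, hdu] at h5
            simp only [taylorTerm, hu, Set.indicator_of_mem, Function.iterate_zero, id, h5]
            rw [← hcoeff u hu, show e + 1 + 1 = 2 + e by omega]
          · simp [taylorTerm, hu]
        have h6 := taylorTerm_mul_mem hL (j := 1) (taylorTerm_descend hL hone e h2) hk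
        rw [← L.smul_mem_iff hα0]
        convert h6 using 1
        ext1 u
        by_cases hu : u ∈ K
        · simp [taylorTerm, hu, smul_eq_C_mul, mul_assoc]
        · simp [taylorTerm, hu]
    · rw [add_comm] at hk
      have := taylorTerm_descend hL hone k hk
      rwa [add_comm] at this
  have heq : taylor (r w) (F w) = taylor (r v) (F v) := by
    ext k
    have h1 := hw _ (cuts_level (scaleBy_mem hL hlS (hcoeffs k))
      ((taylor (r v) (F v)).coeff k)) (by simp [hvK])
    simpa [hw] using h1
  refine ⟨-r w + r v, ?_⟩
  rw [← taylor_taylor, ← heq, taylor_taylor]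
  simp

/-- If `v` is separated from all other indices by the translation classes of the components of
the families `F c`, its atom is `{v}`, so `L` contains the unit vector at `v`. -/
theorem single_mem_of_separated [Fintype ι] [DecidableEq ι] {κ : Type} (hL : DerivMulClosed L)
    (F : κ → ι → ℝ[X])
    (hF : ∀ c k, (fun w => derivative^[k] (F c w)) ∈ L)
    (hdeg : ∀ c w, F c w = 0 ∨ 1 ≤ (F c w).natDegree) (v : ι) (c₀ : κ) (hv : F c₀ v ≠ 0)
    (hsep : ∀ w, (∀ c, ∃ s, F c w = taylor s (F c v)) → w = v) :
    Pi.single v 1 ∈ L := by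
  have hatom : atomOf L v = {v} := by
    ext w
    refine ⟨fun hw => hsep w fun c => atomOf_translate hL (hF c) (hdeg c) hw, ?_⟩
    rintro rfl
    exact fun _ _ h => h
  have hcut := cuts_atomOf (L := L) v
  rw [hatom] at hcut
  set n := (F c₀ v).natDegree with hn
  have ha : (n.factorial : ℝ) * (F c₀ v).leadingCoeff ≠ 0 :=
    mul_ne_zero (by positivity) (leadingCoeff_ne_zero.2 hv)
  rw [← L.smul_mem_iff ha]
  convert hcut _ (hF c₀ n) using 1
  ext1 w
  by_cases hw : w = v
  · subst hw
    have h0 : (derivative^[n] (F c₀ w)).natDegree = 0 := by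
      have := natDegree_iterate_derivative (F c₀ w) n
      omega
    have h1 := eq_C_of_natDegree_eq_zero h0
    rw [coeff_iterate_derivative, zero_add, Nat.descFactorial_self] at h1
    simp only [Pi.smul_apply, Pi.single_eq_same, Set.mem_singleton_iff, Set.indicator_of_mem]
    rw [h1, smul_eq_C_mul, mul_one, nsmul_eq_mul, leadingCoeff]
  · simp [hw]

end Abstract

/-! ### Brackets of momentum fields -/

section Concrete

variable {V : Type} [Fintype V]

/-- The vector field `∑_v g_v(q_v) ∂_{p_v}`. -/
def momentumField (g : V → ℝ[X]) : Phase V → Phase V :=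
  fun x => (0, fun v => (g v).eval (x.1 v))

/-- The vector field `∑_v g_v(q_v - q_c) ∂_{p_v}`. -/
def relativeField (c : V) (g : V → ℝ[X]) : Phase V → Phase V :=
  fun x => (0, fun v => (g v).eval (x.1 v - x.1 c))

theorem fderiv_snd_eq {f : Phase V → Phase V} {x u : Phase V} {v : V} {y : ℝ}
    (hf : DifferentiableAt ℝ f x) (h : HasDerivAt (fun t : ℝ => (f (x + t • u)).2 v) y 0) :
    (fderiv ℝ f x u).2 v = y := by
  have h1 : HasDerivAt (fun t : ℝ => f (x + t • u)) (fderiv ℝ f x u) 0 :=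
    hf.hasFDerivAt.hasLineDerivAt u
  have h2 := hasDerivAt_pi.1 h1.hasFDerivAt.snd.hasDerivAt v
  simp only [ContinuousLinearMap.comp_apply, ContinuousLinearMap.toSpanSingleton_apply] at h2
  simpa using h2.unique h

theorem fderiv_fst_eq {f : Phase V → Phase V} {x u : Phase V} {v : V} {y : ℝ}
    (hf : DifferentiableAt ℝ f x) (h : HasDerivAt (fun t : ℝ => (f (x + t • u)).1 v) y 0) :
    (fderiv ℝ f x u).1 v = y := by
  have h1 : HasDerivAt (fun t : ℝ => f (x + t • u)) (fderiv ℝ f x u) 0 :=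
    hf.hasFDerivAt.hasLineDerivAt u
  have h2 := hasDerivAt_pi.1 h1.hasFDerivAt.fst.hasDerivAt v
  simpa using h2.unique h

theorem contDiff_coord_fst (v : V) : ContDiff ℝ (⊤ : ℕ∞) (fun x : Phase V => x.1 v) :=
  (contDiff_apply ℝ ℝ v).comp contDiff_fst

theorem contDiff_coord_snd (v : V) : ContDiff ℝ (⊤ : ℕ∞) (fun x : Phase V => x.2 v) :=
  (contDiff_apply ℝ ℝ v).comp contDiff_snd

theorem contDiff_eval (p : ℝ[X]) : ContDiff ℝ (⊤ : ℕ∞) (fun y : ℝ => p.eval y) := by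
  simp only [eval_eq_sum_range]
  fun_prop

theorem hasDerivAt_eval_line (p : ℝ[X]) (a b : ℝ) :
    HasDerivAt (fun t : ℝ => p.eval (a + t * b)) ((derivative p).eval a * b) 0 := by
  have hl : HasDerivAt (fun t : ℝ => a + t * b) b 0 := by
    simpa using ((hasDerivAt_id (0 : ℝ)).mul_const b).const_add a
  have hp : HasDerivAt (fun y => p.eval y) ((derivative p).eval a) (a + 0 * b) := by
    simpa using p.hasDerivAt (a + 0 * b)
  exact HasDerivAt.comp (0 : ℝ) hp hl

theorem hasDerivAt_eval_sub (p : ℝ[X]) (a b : ℝ) :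
    HasDerivAt (fun t : ℝ => p.eval (a - (b + t))) (-(derivative p).eval (a - b)) 0 := by
  have h := hasDerivAt_eval_line p (a - b) (-1)
  rw [mul_neg_one] at h
  refine h.congr_of_eventuallyEq (Filter.Eventually.of_forall fun t => ?_)
  simp only
  congr 1
  ring

theorem contDiff_momentumField (g : V → ℝ[X]) :
    ContDiff ℝ (⊤ : ℕ∞) (momentumField g) :=
  contDiff_const.prodMk (contDiff_pi.2 fun v => (contDiff_eval (g v)).comp (contDiff_coord_fst v))

theorem contDiff_relativeField (c : V) (g : V → ℝ[X]) :
    ContDiff ℝ (⊤ : ℕ∞) (relativeField c g) :=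
  contDiff_const.prodMk (contDiff_pi.2 fun v =>
    (contDiff_eval (g v)).comp ((contDiff_coord_fst v).sub (contDiff_coord_fst c)))

variable [DecidableEq V]

theorem contDiff_X0 (G : SimpleGraph V) [DecidableRel G.Adj] (γ : V → ℝ) (U : V → ℝ → ℝ)
    (Vp : V → V → ℝ[X]) (hU : ∀ v, ContDiff ℝ (⊤ : ℕ∞) (U v)) :
    ContDiff ℝ (⊤ : ℕ∞) (X0 G γ U Vp) := by
  refine contDiff_snd.prodMk (contDiff_pi.2 fun v => ?_)
  refine ((contDiff_const.mul (contDiff_coord_snd v)).sub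
    ((contDiff_infty_iff_deriv.1 (hU v)).2.comp (contDiff_coord_fst v))).sub ?_
  exact ContDiff.sum fun w _ => (contDiff_eval (derivative (Vp v w))).comp
    ((contDiff_coord_fst v).sub (contDiff_coord_fst w))

variable {Vstar : Finset V} {X : Phase V → Phase V}

theorem MM.sub {Y Z : Phase V → Phase V} (hY : MM Vstar X Y) (hZ : MM Vstar X Z) :
    MM Vstar X (Y - Z) := by
  rw [sub_eq_add_neg, ← neg_one_smul ℝ Z]
  exact hY.add (hZ.smul (-1))

theorem MM.zero {Y : Phase V → Phase V} (hY : MM Vstar X Y) : MM Vstar X 0 := by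
  simpa using hY.smul 0

theorem MM.sum {κ : Type*} (s : Finset κ) (Y : κ → Phase V → Phase V) (h0 : MM Vstar X 0)
    (hY : ∀ i ∈ s, MM Vstar X (Y i)) : MM Vstar X (∑ i ∈ s, Y i) :=
  Finset.sum_induction _ _ (fun _ _ => MM.add) h0 hY

theorem lieB_momentumField_X0 (G : SimpleGraph V) [DecidableRel G.Adj] (γ : V → ℝ)
    (U : V → ℝ → ℝ) (Vp : V → V → ℝ[X]) (hU : ∀ v, ContDiff ℝ (⊤ : ℕ∞) (U v)) (g : V → ℝ[X]) :
    lieB (momentumField g) (X0 G γ U Vp) = fun x =>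
      (fun v => (g v).eval (x.1 v),
        fun v => -(γ v) * (g v).eval (x.1 v) - (derivative (g v)).eval (x.1 v) * x.2 v) := by
  funext x
  have hX := (contDiff_X0 G γ U Vp hU).contDiffAt.differentiableAt (by simp) (x := x)
  have hg := (contDiff_momentumField g).contDiffAt.differentiableAt (by simp) (x := x)
  refine Prod.ext ?_ ?_ <;> funext v
  · have h1 : (fderiv ℝ (X0 G γ U Vp) x (momentumField g x)).1 v = (g v).eval (x.1 v) := by
      refine fderiv_fst_eq hX ?_
      simp only [X0, momentumField, Prod.snd_add, Prod.smul_snd, Pi.add_apply, Pi.smul_apply,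
        smul_eq_mul]
      simpa using ((hasDerivAt_id (0 : ℝ)).mul_const ((g v).eval (x.1 v))).const_add (x.2 v)
    have h2 : (fderiv ℝ (momentumField g) x (X0 G γ U Vp x)).1 v = 0 :=
      fderiv_fst_eq hg (by simpa [momentumField] using hasDerivAt_const (0 : ℝ) (0 : ℝ))
    simp [lieB, h1, h2]
  · have h1 : (fderiv ℝ (X0 G γ U Vp) x (momentumField g x)).2 v
        = -(γ v) * (g v).eval (x.1 v) := by
      refine fderiv_snd_eq hX ?_
      simp only [X0, momentumField, Prod.snd_add, Prod.smul_snd, Prod.fst_add, Prod.smul_fst,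
        Pi.add_apply, Pi.smul_apply, smul_eq_mul, smul_zero]
      have := ((((hasDerivAt_id (0 : ℝ)).mul_const ((g v).eval (x.1 v))).const_add
        (x.2 v)).const_mul (-(γ v)))
      simp only [id, one_mul] at this
      exact (this.sub_const _).sub_const _
    have h2 : (fderiv ℝ (momentumField g) x (X0 G γ U Vp x)).2 v
        = (derivative (g v)).eval (x.1 v) * x.2 v := by
      refine fderiv_snd_eq hg ?_
      simp only [X0, momentumField, Prod.fst_add, Prod.smul_fst, Pi.add_apply, Pi.smul_apply,
        smul_eq_mul]
      exact hasDerivAt_eval_line (g v) (x.1 v) (x.2 v)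
    simp [lieB, h1, h2]

/-- `[[g ∂_p, X₀], h ∂_p] = (g h)' ∂_p`: friction and forces drop out of the double bracket. -/
theorem MM.momentumField_derivMul (G : SimpleGraph V) [DecidableRel G.Adj] (γ : V → ℝ)
    (U : V → ℝ → ℝ) (Vp : V → V → ℝ[X]) (hU : ∀ v, ContDiff ℝ (⊤ : ℕ∞) (U v)) (g h : V → ℝ[X])
    (hg : MM Vstar (X0 G γ U Vp) (momentumField g))
    (hh : MM Vstar (X0 G γ U Vp) (momentumField h)) :
    MM Vstar (X0 G γ U Vp) (momentumField fun v => derivative (g v * h v)) := by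
  have key := (hg.lieX).lie hh
  rw [lieB_momentumField_X0 G γ U Vp hU g] at key
  convert key using 1
  funext x
  set Y : Phase V → Phase V := fun x => (fun v => (g v).eval (x.1 v),
        fun v => -(γ v) * (g v).eval (x.1 v) - (derivative (g v)).eval (x.1 v) * x.2 v) with hYdef
  have hY : DifferentiableAt ℝ Y x := by
    have : ContDiff ℝ (⊤ : ℕ∞) Y := by
      refine (contDiff_pi.2 fun v => ?_).prodMk (contDiff_pi.2 fun v => ?_)
      · exact (contDiff_eval (g v)).comp (contDiff_coord_fst v)
      · exact (contDiff_const.mul ((contDiff_eval (g v)).comp (contDiff_coord_fst v))).sub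
          (((contDiff_eval (derivative (g v))).comp (contDiff_coord_fst v)).mul (contDiff_coord_snd v))
    exact this.contDiffAt.differentiableAt (by simp)
  have hH := (contDiff_momentumField h).contDiffAt.differentiableAt (by simp) (x := x)
  refine Prod.ext ?_ ?_ <;> funext v
  · have h1 : (fderiv ℝ (momentumField h) x (Y x)).1 v = 0 :=
      fderiv_fst_eq hH (by simpa [momentumField] using hasDerivAt_const (0 : ℝ) (0 : ℝ))
    have h2 : (fderiv ℝ Y x (momentumField h x)).1 v = 0 :=
      fderiv_fst_eq hY (by
        simpa [hYdef, momentumField] using hasDerivAt_const (0 : ℝ) ((g v).eval (x.1 v)))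
    simp only [lieB, Prod.fst_sub, Pi.sub_apply, h1, h2]
    simp [momentumField]
  · have h1 : (fderiv ℝ (momentumField h) x (Y x)).2 v
        = (derivative (h v)).eval (x.1 v) * (g v).eval (x.1 v) := by
      refine fderiv_snd_eq hH ?_
      simp only [hYdef, momentumField, Prod.fst_add, Prod.smul_fst, Pi.add_apply, Pi.smul_apply,
        smul_eq_mul]
      exact hasDerivAt_eval_line (h v) (x.1 v) ((g v).eval (x.1 v))
    have h2 : (fderiv ℝ Y x (momentumField h x)).2 v
        = -((derivative (g v)).eval (x.1 v) * (h v).eval (x.1 v)) := by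
      refine fderiv_snd_eq hY ?_
      simp only [hYdef, momentumField, Prod.fst_add, Prod.smul_fst, Prod.snd_add, Prod.smul_snd,
        Pi.add_apply, Pi.smul_apply, smul_eq_mul, smul_zero]
      have := (((hasDerivAt_id (0 : ℝ)).mul_const ((h v).eval (x.1 v))).const_add
        (x.2 v)).const_mul ((derivative (g v)).eval (x.1 v))
      simpa using this.const_sub (-(γ v) * (g v).eval (x.1 v))
    simp only [lieB, Prod.snd_sub, Pi.sub_apply, h1, h2]
    simp [momentumField, derivative_mul]
    ring

/-- Bracketing with `∂_{q_c}` differentiates the coefficients, up to sign. The component at `c`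
has to vanish, as `q_c - q_c` does not depend on `q_c`. -/
theorem MM.relativeField_derivative {c : V} {g : V → ℝ[X]} (hgc : g c = 0)
    (hc : MM Vstar X (dq c))
    (hg : MM Vstar X (relativeField c g)) :
    MM Vstar X (relativeField c fun v => derivative (g v)) := by
  have key := (hc.lie hg).smul (-1)
  convert key using 1
  funext x
  have hH := (contDiff_relativeField c g).contDiffAt.differentiableAt (by simp) (x := x)
  have h0 : fderiv ℝ (dq c : Phase V → Phase V) x = 0 := by
    unfold dq
    exact fderiv_const_apply _
  refine Prod.ext ?_ ?_ <;> funext v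
  · have h1 : (fderiv ℝ (relativeField c g) x (dq c x)).1 v = 0 :=
      fderiv_fst_eq hH (by simpa [relativeField] using hasDerivAt_const (0 : ℝ) (0 : ℝ))
    simp [lieB, h0, h1, relativeField]
  · have h1 : (fderiv ℝ (relativeField c g) x (dq c x)).2 v
        = -(derivative (g v)).eval (x.1 v - x.1 c) := by
      refine fderiv_snd_eq hH ?_
      by_cases hv : v = c
      · subst hv
        simpa [relativeField, hgc] using hasDerivAt_const (0 : ℝ) (0 : ℝ)
      · simp only [dq, relativeField, Prod.fst_add, Prod.smul_fst, Pi.add_apply, Pi.smul_apply,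
          smul_eq_mul, Pi.single_eq_same, Pi.single_eq_of_ne hv, mul_zero, add_zero, mul_one]
        exact hasDerivAt_eval_sub (g v) (x.1 v) (x.1 c)
    simp [lieB, h0, h1, relativeField]

theorem MM.relativeField_iterate {c : V} {g : V → ℝ[X]} (hgc : g c = 0)
    (hc : MM Vstar X (dq c)) (hg : MM Vstar X (relativeField c g)) (k : ℕ) :
    MM Vstar X (relativeField c fun v => derivative^[k] (g v)) := by
  induction k with
  | zero => exact hg
  | succ k ih =>
    simp only [Function.iterate_succ_apply']
    exact MM.relativeField_derivative (by simp [hgc]) hc ih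

/-- Taylor's formula `g(q_v) = ∑_k q_c^k / k! * g^{(k)}(q_v - q_c)` removes the dependence on
`q_c`. -/
theorem MM.momentumField_of_relativeField {c : V} {g : V → ℝ[X]} (hgc : g c = 0)
    (hc : MM Vstar X (dq c)) (hg : MM Vstar X (relativeField c g)) :
    MM Vstar X (momentumField g) := by
  set N := Finset.univ.sup (fun w => (g w).natDegree) + 1 with hN
  have key : MM Vstar X (∑ k ∈ Finset.range N, fun x : Phase V =>
      ((x.1 c) ^ k / (k.factorial : ℝ)) • relativeField c (fun v => derivative^[k] (g v)) x) := by
    refine MM.sum _ _ hg.zero fun k _ => ?_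
    exact MM.mulS _ (((contDiff_coord_fst c).pow k).div_const _)
      (MM.relativeField_iterate hgc hc hg k)
  convert key using 1
  funext x
  refine Prod.ext ?_ ?_ <;> funext v
  · simp [Finset.sum_apply, momentumField, relativeField, Prod.fst_sum]
  · simp only [momentumField, Finset.sum_apply, relativeField, Prod.snd_sum, Prod.smul_snd,
      Pi.smul_apply, smul_eq_mul]
    have h1 := taylor_eval (x.1 v - x.1 c) (g v) (x.1 c)
    rw [add_sub_cancel] at h1
    have hlt : (taylor (x.1 v - x.1 c) (g v)).natDegree < N := by
      rw [natDegree_taylor, hN, Nat.lt_succ_iff]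
      exact Finset.le_sup (f := fun w => (g w).natDegree) (Finset.mem_univ v)
    rw [← h1, eval_eq_sum_range' hlt]
    refine Finset.sum_congr rfl fun k _ => ?_
    rw [taylor_coeff, ← factorial_smul_hasseDeriv]
    have : (k.factorial : ℝ) ≠ 0 := by positivity
    simp
    field_simp

/-- The bracket `[∂_{q_c}, X₀]` is, up to a multiple of `∂_{p_c}`, the field
`∑_{v ~ c} V''_{vc}(q_v - q_c) ∂_{p_v}`. -/
theorem MM.relativeField_of_controllable (G : SimpleGraph V) [DecidableRel G.Adj] (γ : V → ℝ)
    (U : V → ℝ → ℝ) (Vp : V → V → ℝ[X]) (hU : ∀ v, ContDiff ℝ (⊤ : ℕ∞) (U v)) (c : V)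
    (hc : Controllable Vstar (X0 G γ U Vp) c) :
    MM Vstar (X0 G γ U Vp) (relativeField c fun v =>
      if G.Adj v c then derivative (derivative (Vp v c)) else 0) := by
  set Y := lieB (dq c) (X0 G γ U Vp) with hYdef
  have hXs := contDiff_X0 G γ U Vp hU
  have hYx : ∀ x, Y x = fderiv ℝ (X0 G γ U Vp) x (dq c x) := by
    intro x
    have h0 : fderiv ℝ (dq c : Phase V → Phase V) x = 0 := by
      unfold dq
      exact fderiv_const_apply _
    simp [hYdef, lieB, h0]
  have hYs : ContDiff ℝ (⊤ : ℕ∞) Y := by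
    have h1 : ContDiff ℝ (⊤ : ℕ∞) (fun x => fderiv ℝ (X0 G γ U Vp) x (dq c x)) :=
      (hXs.fderiv_right (by simp)).clm_apply contDiff_const
    exact (funext hYx : Y = _) ▸ h1
  have hf : ContDiff ℝ (⊤ : ℕ∞) (fun x => (Y x).2 c) := (contDiff_coord_snd c).comp hYs
  have key := (MM.lieX hc.1).sub (MM.mulS _ hf hc.2)
  convert key using 1
  funext x
  have hX := hXs.contDiffAt.differentiableAt (by simp) (x := x)
  change _ = Y x - (Y x).2 c • dp c x
  refine Prod.ext ?_ ?_ <;> funext v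
  · have h1 : (Y x).1 v = 0 := by
      rw [hYx]
      exact fderiv_fst_eq hX (by simpa [X0, dq] using hasDerivAt_const (0 : ℝ) (x.2 v))
    simp [relativeField, dp, h1]
  · by_cases hv : v = c
    · subst hv
      simp [relativeField, dp]
    · have h1 : (Y x).2 v = ∑ w ∈ Finset.univ.filter (fun w => G.Adj v w),
          if w = c then (derivative (derivative (Vp v w))).eval (x.1 v - x.1 w) else 0 := by
        rw [hYx]
        refine fderiv_snd_eq hX ?_
        simp only [X0, dq, Prod.fst_add, Prod.smul_fst, Prod.snd_add, Prod.smul_snd,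
          Pi.add_apply, Pi.smul_apply, smul_eq_mul, smul_zero, Pi.zero_apply,
          Pi.single_eq_of_ne hv, mul_zero, add_zero]
        have hs : HasDerivAt (fun t : ℝ => ∑ w ∈ Finset.univ.filter (fun w => G.Adj v w),
            (derivative (Vp v w)).eval (x.1 v - (x.1 w + t * (Pi.single c (1 : ℝ) : V → ℝ) w)))
            (∑ w ∈ Finset.univ.filter (fun w => G.Adj v w),
              if w = c then -(derivative (derivative (Vp v w))).eval (x.1 v - x.1 w) else 0)
            0 := by
          refine HasDerivAt.fun_sum fun w _ => ?_
          by_cases hw : w = c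
          · subst hw
            simp only [Pi.single_eq_same, mul_one, if_true]
            exact hasDerivAt_eval_sub (derivative (Vp v w)) (x.1 v) (x.1 w)
          · simpa [hw] using hasDerivAt_const (0 : ℝ) ((derivative (Vp v w)).eval (x.1 v - x.1 w))
        refine (hs.const_sub (-(γ v) * x.2 v - deriv (U v) (x.1 v))).congr_deriv ?_
        rw [← Finset.sum_neg_distrib]
        refine Finset.sum_congr rfl fun w _ => ?_
        split_ifs <;> simp
      have h2 : (Y x - (Y x).2 c • dp c x).2 v = (Y x).2 v := by simp [dp, hv]
      rw [h2, h1]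
      simp only [relativeField]
      rw [Finset.sum_ite_eq' (Finset.univ.filter (fun w => G.Adj v w)) c]
      by_cases ha : G.Adj v c <;> simp [ha]

/-- The polynomial vectors `g` whose momentum field belongs to `𝓜`. The hypothesis `0 ∈ 𝓜` only
excludes that `𝓜`, as generated, is empty (no vertex in `V*`). -/
def momentumModule (Vstar : Finset V) (X : Phase V → Phase V) (h0 : MM Vstar X 0) :
    Submodule ℝ (V → ℝ[X]) where
  carrier := {g | MM Vstar X (momentumField g)}
  zero_mem' := by
    change MM Vstar X _
    convert h0 using 1
    funext x
    refine Prod.ext rfl ?_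
    funext v
    simp [momentumField]
  add_mem' {a b} ha hb := by
    change MM Vstar X _
    convert MM.add ha hb using 1
    funext x
    refine Prod.ext ?_ ?_ <;> funext v <;> simp [momentumField]
  smul_mem' r a ha := by
    change MM Vstar X _
    convert MM.smul r ha using 1
    funext x
    refine Prod.ext ?_ ?_ <;> funext v <;> simp [momentumField]

theorem MM.momentumField_single {c : V} (hc : MM Vstar X (dp c)) (p : ℝ[X]) :
    MM Vstar X (momentumField (Pi.single c p)) := by
  convert MM.mulS (fun x => p.eval (x.1 c)) ((contDiff_eval p).comp (contDiff_coord_fst c)) hc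
    using 1
  funext x
  refine Prod.ext ?_ ?_ <;> funext v
  · simp [momentumField, dp]
  · by_cases hv : v = c
    · subst hv; simp [momentumField, dp]
    · simp [momentumField, dp, hv]

/-- `∂_{p_v} ∈ 𝓜` suffices, because `[∂_{p_v}, X₀] = ∂_{q_v} - γ_v ∂_{p_v}`. -/
theorem controllable_of_momentum (G : SimpleGraph V) [DecidableRel G.Adj] (γ : V → ℝ)
    (U : V → ℝ → ℝ) (Vp : V → V → ℝ[X]) (hU : ∀ v, ContDiff ℝ (⊤ : ℕ∞) (U v)) (v : V)
    (hv : MM Vstar (X0 G γ U Vp) (momentumField (Pi.single v 1))) :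
    Controllable Vstar (X0 G γ U Vp) v := by
  have hone : ∀ (w : V) (y : ℝ),
      ((Pi.single v 1 : V → ℝ[X]) w).eval y = (Pi.single v 1 : V → ℝ) w := by
    intro w y
    by_cases hw : w = v
    · subst hw; simp
    · simp [hw]
  have hder : ∀ (w : V), derivative ((Pi.single v 1 : V → ℝ[X]) w) = 0 := by
    intro w
    by_cases hw : w = v
    · subst hw; simp
    · simp [hw]
  have hp : MM Vstar (X0 G γ U Vp) (dp v) := by
    convert hv using 1
    funext x
    simp [momentumField, dp, hone]
  refine ⟨?_, hp⟩
  convert hv.lieX.add (hp.smul (γ v)) using 1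
  rw [lieB_momentumField_X0 G γ U Vp hU]
  funext x
  refine Prod.ext ?_ ?_ <;> funext w
  · simp [dq, dp, hone]
  · by_cases hw : w = v
    · subst hw; simp [dq, dp]
    · simp [dq, dp, hone, hder, hw]

end Concrete

/-! ### Conclusion -/

theorem eval_derivative_derivative_symm {p q : ℝ[X]} (h : ∀ x : ℝ, p.eval x = q.eval (-x)) (x : ℝ) :
    (derivative (derivative p)).eval x = (derivative (derivative q)).eval (-x) := by
  have hpq : p = q.comp (-Polynomial.X) := Polynomial.funext fun x => by simp [h x]
  rw [hpq]
  simp [derivative_comp]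

/-- Corollary 5.5. Let `C` be a set of controllable vertices. If a
vertex `v ∈ N(C)` is alone in its `C`-equivalence class, then `v` is controllable. -/
theorem controllable_of_alone_in_CEquiv_class
    {V : Type} [Fintype V] [DecidableEq V] (G : SimpleGraph V) [DecidableRel G.Adj]
    (Vstar : Finset V) (γ : V → ℝ) (U : V → ℝ → ℝ) (Vp : V → V → Polynomial ℝ)
    (hγpos : ∀ v ∈ Vstar, 0 < γ v) (hγ0 : ∀ v ∉ Vstar, γ v = 0)
    (hU : ∀ v, ContDiff ℝ (⊤ : ℕ∞) (U v))
    (hsym : ∀ u v, G.Adj u v → ∀ x : ℝ, (Vp v u).eval x = (Vp u v).eval (-x))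
    (hdeg : ∀ u v, G.Adj u v → 3 ≤ (Vp u v).natDegree)
    (C : Finset V) (hC : ∀ c ∈ C, Controllable Vstar (X0 G γ U Vp) c)
    (v : V) (hv : v ∈ NC G C)
    (halone : ∀ w ∈ NC G C, CEquiv G Vp C w v → w = v) :
    Controllable Vstar (X0 G γ U Vp) v := by
  obtain ⟨hvC, c₀, hc₀, hadj₀⟩ : v ∉ C ∧ ∃ c ∈ C, G.Adj c v := by simpa [NC] using hv
  set X := X0 G γ U Vp with hX
  have h0 : MM Vstar X 0 := (hC c₀ hc₀).1.zero
  let L := momentumModule Vstar X h0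
  have hL : DerivMulClosed L := fun g hg h hh =>
    MM.momentumField_derivMul G γ U Vp hU g h hg hh
  -- the coupling of `c` to the vertices outside `C`, as a vector of polynomials
  let F : {c // c ∈ C} → V → ℝ[X] := fun c w =>
    if G.Adj w c ∧ w ∉ C then derivative (derivative (Vp w c)) else 0
  have hpos : ∀ w u, G.Adj w u → 1 ≤ (derivative (derivative (Vp w u))).natDegree := by
    intro w u h
    have := hdeg w u h
    rw [natDegree_derivative, natDegree_derivative]
    omega
  have hFne : ∀ c w, F c w ≠ 0 ↔ G.Adj w c ∧ w ∉ C := by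
    intro c w
    by_cases h : G.Adj w c ∧ w ∉ C
    · have h1 := hpos w c h.1
      simp only [F, h, not_false_eq_true, and_self, if_true, iff_true]
      intro h2
      simp [h2] at h1
    · simp [F, h]
  have hF : ∀ c k, (fun w => derivative^[k] (F c w)) ∈ L := by
    intro c k
    have hrel := MM.relativeField_iterate (by simp) (hC c c.2).1
      (MM.relativeField_of_controllable G γ U Vp hU c (hC c c.2)) k
    have hall := MM.momentumField_of_relativeField (by simp) (hC c c.2).1 hrel
    set H : V → ℝ[X] := fun w =>
      derivative^[k] (if G.Adj w c then derivative (derivative (Vp w c)) else 0) with hH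
    have hsub : H - ∑ u ∈ C, Pi.single u (H u) ∈ L :=
      L.sub_mem hall (L.sum_mem fun u hu => MM.momentumField_single (hC u hu).2 (H u))
    convert hsub using 1
    ext1 w
    by_cases hw : w ∈ C
    · simp [F, hw, Finset.sum_apply, Pi.single_apply]
    · simp [F, hw, hH, Finset.sum_apply, Pi.single_apply]
  refine controllable_of_momentum G γ U Vp hU v ?_
  refine single_mem_of_separated hL F hF ?_ v ⟨c₀, hc₀⟩ ((hFne _ _).2 ⟨hadj₀.symm, hvC⟩) ?_
  · intro c w
    by_cases h : G.Adj w c ∧ w ∉ C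
    · right
      simpa [F, h] using hpos w c h.1
    · left
      simp [F, h]
  · intro w hw
    have hiff : ∀ c ∈ C, (G.Adj w c ∧ w ∉ C) ↔ (G.Adj v c ∧ v ∉ C) := by
      intro c hc
      obtain ⟨s, hs⟩ := hw ⟨c, hc⟩
      rw [← hFne ⟨c, hc⟩ w, ← hFne ⟨c, hc⟩ v, hs, Ne, taylor_eq_zero]
    obtain ⟨hadjw, hwC⟩ := (hiff c₀ hc₀).2 ⟨hadj₀.symm, hvC⟩
    refine halone w (by simpa [NC] using ⟨hwC, c₀, hc₀, hadjw.symm⟩) ⟨?_, ?_⟩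
    · intro c hc
      simpa [hwC, hvC, G.adj_comm c] using hiff c hc
    · intro c hc hcw hcv
      obtain ⟨s, hs⟩ := hw ⟨c, hc⟩
      simp only [F, hcw.symm, hcv.symm, hwC, hvC, not_false_eq_true, and_self, if_true] at hs
      refine ⟨-s, fun x => ?_⟩
      rw [eval_derivative_derivative_symm (hsym w c hcw.symm) x,
        eval_derivative_derivative_symm (hsym v c hcv.symm) (x + -s), hs, taylor_eval]
      congr 1
      ring
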